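/- For every integer r ≥ 1, the sum over n from 3 to infinity of (H_{n−1}² − H_{n−1}^{(2)})·h_n^{(r)}/(n·C(n+r, r)) equals (H_r² + H_r^{(2)})·π²/6 + 2·H_r·ζ(3) + π⁴/45. -/

import Mathlib

open Finset Real

noncomputable def H (n : ℕ) : ℝ := ∑ i ∈ Finset.range n, 1/((i:ℝ)+1)

noncomputable def H2 (n : ℕ) : ℝ := ∑ i ∈ Finset.range n, 1/((i:ℝ)+1)^2

noncomputable def H3 (n : ℕ) : ℝ := ∑ i ∈ Finset.range n, 1/((i:ℝ)+1)^3

noncomputable def hh (r n : ℕ) : ℝ := (Nat.choose (n+r-1) (r-1)) * (H (n+r-1) - H (r-1))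

noncomputable def zeta3 : ℝ := ∑' n : ℕ, 1/((n:ℝ)+1)^3

/-!
Write `e_k(j)` and `h_k(r)` for the elementary and complete homogeneous symmetric functions of
`1, 1/2, …, 1/j` and of `1, 1/2, …, 1/r`, so that `H_j² - H_j^{(2)} = 2 e_2(j)` and
`H_r² + H_r^{(2)} = 2 h_2(r)`. The sum is twice the case `k = 2` of
`∑_j e_k(j) W_r(j) = ∑_{a + b = k} h_a(r) ζ(b + 2)`, where
`W_r(j) = h_n^{(r)} / (n C(n + r, r))` at `n = j + 1`. Both sides satisfy
`V(k + 1, r + 1) = V(k + 1, r) + V(k, r + 1) / (r + 1)`: on the right this is the recursion of the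
`h_a`; on the left, `W_{r + 1} - W_r` is a telescoping difference, and summation by parts lowers the
degree of `e_{k + 1}`. With `W_0(j) = 1 / (j + 1)²`, the case `r = 0` is the duality
`ζ(2, 1, …, 1) = ζ(k + 2)`, which comes from summing
`e_k(j) / ((p + 1) (j + 1) C(j + p + 2, p + 1))` over `j` and `p` in either order.
-/

open Filter Topology Asymptotics

section Summation

lemma hasSum_comm_of_nonneg {α β : Type*} {f : α → β → ℝ} {a : α → ℝ} {b : β → ℝ} {s : ℝ}
    (hf : ∀ x y, 0 ≤ f x y) (ha : ∀ x, HasSum (f x) (a x)) (hb : ∀ y, HasSum (fun x ↦ f x y) (b y))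
    (hs : HasSum a s) : HasSum b s := by
  have hsum : Summable (Function.uncurry f) := by
    refine (summable_prod_of_nonneg fun x ↦ hf x.1 x.2).2 ⟨fun x ↦ (ha x).summable, ?_⟩
    simpa only [Function.uncurry_apply_pair, (ha _).tsum_eq] using hs.summable
  have hprod : HasSum (Function.uncurry f) s := by
    rw [← (hsum.hasSum.prod_fiberwise ha).unique hs]
    exact hsum.hasSum
  exact HasSum.prod_fiberwise ((Equiv.prodComm β α).hasSum_iff.2 hprod) hb

lemma sum_range_mul_sub_succ (E K : ℕ → ℝ) (N : ℕ) :
    ∑ j ∈ range N, E j * (K j - K (j + 1)) =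
      E 0 * K 0 - E N * K N + ∑ j ∈ range N, (E (j + 1) - E j) * K (j + 1) := by
  induction N with
  | zero => simp
  | succ N ih => rw [sum_range_succ, sum_range_succ, ih]; ring

lemma hasSum_mul_of_eq_add_sub_succ {E K f g : ℕ → ℝ} {v w : ℝ}
    (hf : ∀ j, f j = g j + (K j - K (j + 1))) (hnonneg : ∀ j, 0 ≤ E j * f j)
    (hlim : Tendsto (fun j ↦ E j * K j) atTop (𝓝 0)) (hv : HasSum (fun j ↦ E j * g j) v)
    (hw : HasSum (fun j ↦ (E (j + 1) - E j) * K (j + 1)) w) :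
    HasSum (fun j ↦ E j * f j) (v + (E 0 * K 0 + w)) := by
  rw [hasSum_iff_tendsto_nat_of_nonneg hnonneg]
  simp_rw [hf, mul_add, sum_add_distrib, sum_range_mul_sub_succ]
  simpa only [sub_zero] using
    hv.tendsto_sum_nat.add ((hlim.const_sub (E 0 * K 0)).add hw.tendsto_sum_nat)

end Summation

section HarmonicNumbers

lemma H_succ (n : ℕ) : H (n + 1) = H n + 1 / ((n : ℝ) + 1) := sum_range_succ _ _

lemma H2_succ (n : ℕ) : H2 (n + 1) = H2 n + 1 / ((n : ℝ) + 1) ^ 2 := sum_range_succ _ _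

lemma H_nonneg (n : ℕ) : 0 ≤ H n := sum_nonneg fun _ _ ↦ by positivity

lemma H_mono : Monotone H := monotone_nat_of_le_succ fun n ↦ by
  rw [H_succ]
  exact le_add_of_nonneg_right (by positivity)

lemma H_add_sub_le (j r : ℕ) : H (j + r) - H r ≤ H j := by
  induction j with
  | zero => simp [H]
  | succ j ih =>
    have hterm : 1 / (((j + r : ℕ) : ℝ) + 1) ≤ 1 / ((j : ℝ) + 1) := by
      gcongr
      exact Nat.le_add_right j r
    rw [Nat.add_right_comm, H_succ, H_succ]
    linarith

lemma H_eq_harmonic (n : ℕ) : H n = harmonic n := by simp [H, harmonic]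

lemma isBigO_H_log : H =O[atTop] fun n : ℕ ↦ Real.log n := by
  refine IsBigO.of_bound 2 ?_
  filter_upwards [(Real.tendsto_log_atTop.comp tendsto_natCast_atTop_atTop).eventually_ge_atTop 1]
    with n hn
  have hlog : 1 ≤ Real.log n := hn
  have hH : H n ≤ 1 + Real.log n := H_eq_harmonic n ▸ harmonic_le_one_add_log n
  rw [Real.norm_of_nonneg (H_nonneg n), Real.norm_of_nonneg (by linarith)]
  linarith

lemma tendsto_H_pow_div (k : ℕ) :
    Tendsto (fun n : ℕ ↦ H n ^ k / ((n : ℝ) + 1)) atTop (𝓝 0) := by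
  have hlog : (fun n : ℕ ↦ Real.log n ^ k) =o[atTop] fun n : ℕ ↦ (n : ℝ) :=
    isLittleO_pow_log_id_atTop.comp_tendsto tendsto_natCast_atTop_atTop
  have hcast : (fun n : ℕ ↦ (n : ℝ)) =O[atTop] fun n : ℕ ↦ (n : ℝ) + 1 :=
    isBigO_of_le _ fun n ↦ by
      rw [Real.norm_of_nonneg (by positivity), Real.norm_of_nonneg (by positivity)]
      linarith
  exact (((isBigO_H_log.pow k).trans_isLittleO hlog).trans_isBigO hcast).tendsto_div_nhds_zero

end HarmonicNumbers

section SymmetricFunctions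

/-- The elementary symmetric function of degree `k` in `1, 1/2, …, 1/j`, written as the nested sum
over `j ≥ m₁ > ⋯ > m_k ≥ 1` of `1 / (m₁ ⋯ m_k)`; the index is `i = m₁ - 1`. -/
noncomputable def harmonicEsymm : ℕ → ℕ → ℝ
  | 0, _ => 1
  | k + 1, j => ∑ i ∈ range j, harmonicEsymm k i / ((i : ℝ) + 1)

/-- The complete homogeneous symmetric function of degree `k` in `1, 1/2, …, 1/r`, written as the
nested sum over `r ≥ m₁ ≥ ⋯ ≥ m_k ≥ 1` of `1 / (m₁ ⋯ m_k)`; the index is `i = m₁ - 1`. -/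
noncomputable def harmonicHsymm : ℕ → ℕ → ℝ
  | 0, _ => 1
  | k + 1, r => ∑ i ∈ range r, harmonicHsymm k (i + 1) / ((i : ℝ) + 1)

@[simp] lemma harmonicEsymm_zero_left (j : ℕ) : harmonicEsymm 0 j = 1 := by simp [harmonicEsymm]

@[simp] lemma harmonicHsymm_zero_left (r : ℕ) : harmonicHsymm 0 r = 1 := by simp [harmonicHsymm]

@[simp] lemma harmonicHsymm_succ_zero (k : ℕ) : harmonicHsymm (k + 1) 0 = 0 := by
  simp [harmonicHsymm]

lemma harmonicEsymm_succ_succ (k j : ℕ) :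
    harmonicEsymm (k + 1) (j + 1) =
      harmonicEsymm (k + 1) j + harmonicEsymm k j / ((j : ℝ) + 1) :=
  sum_range_succ _ _

lemma harmonicHsymm_succ_succ (k r : ℕ) :
    harmonicHsymm (k + 1) (r + 1) =
      harmonicHsymm (k + 1) r + harmonicHsymm k (r + 1) / ((r : ℝ) + 1) :=
  sum_range_succ _ _

lemma harmonicEsymm_one (j : ℕ) : harmonicEsymm 1 j = H j := by simp [harmonicEsymm, H]

lemma harmonicHsymm_one (r : ℕ) : harmonicHsymm 1 r = H r := by simp [harmonicHsymm, H]

lemma harmonicEsymm_two (j : ℕ) : harmonicEsymm 2 j = (H j ^ 2 - H2 j) / 2 := by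
  induction j with
  | zero => simp [harmonicEsymm, H, H2]
  | succ j ih =>
    rw [harmonicEsymm_succ_succ, ih, harmonicEsymm_one, H_succ, H2_succ]
    field_simp
    ring

lemma harmonicHsymm_two (r : ℕ) : harmonicHsymm 2 r = (H r ^ 2 + H2 r) / 2 := by
  induction r with
  | zero => simp [H, H2]
  | succ r ih =>
    rw [harmonicHsymm_succ_succ, ih, harmonicHsymm_one, H_succ, H2_succ]
    field_simp
    ring

lemma harmonicEsymm_eq_zero_of_lt {k j : ℕ} (h : j < k) : harmonicEsymm k j = 0 := by
  induction k generalizing j with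
  | zero => exact absurd h (Nat.not_lt_zero j)
  | succ k ih =>
    refine sum_eq_zero fun i hi ↦ ?_
    rw [ih ((mem_range.1 hi).trans_le (Nat.lt_succ_iff.1 h)), zero_div]

lemma harmonicEsymm_nonneg (k j : ℕ) : 0 ≤ harmonicEsymm k j := by
  induction k generalizing j with
  | zero => simp
  | succ k ih => exact sum_nonneg fun i _ ↦ div_nonneg (ih i) (by positivity)

lemma harmonicEsymm_le_H_pow (k j : ℕ) : harmonicEsymm k j ≤ H j ^ k := by
  induction k generalizing j with
  | zero => simp
  | succ k ih =>
    rw [pow_succ, H, mul_sum]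
    refine sum_le_sum fun i hi ↦ ?_
    rw [mul_one_div]
    have hmono : H i ≤ H j := H_mono (mem_range.1 hi).le
    exact div_le_div_of_nonneg_right ((ih i).trans (pow_le_pow_left₀ (H_nonneg i) hmono k))
      (by positivity)

lemma tendsto_harmonicEsymm_mul_of_le {K : ℕ → ℝ} (k l : ℕ) (hK : ∀ j, 0 ≤ K j)
    (hle : ∀ j, K j ≤ H j ^ l / ((j : ℝ) + 1)) :
    Tendsto (fun j ↦ harmonicEsymm k j * K j) atTop (𝓝 0) := by
  refine squeeze_zero (fun j ↦ mul_nonneg (harmonicEsymm_nonneg k j) (hK j)) (fun j ↦ ?_)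
    (tendsto_H_pow_div (k + l))
  rw [pow_add, mul_div_assoc]
  exact mul_le_mul (harmonicEsymm_le_H_pow k j) (hle j) (hK j) (pow_nonneg (H_nonneg j) k)

lemma hasSum_harmonicEsymm_mul_nat_add {f : ℕ → ℝ} {k : ℕ} {s : ℝ}
    (h : HasSum (fun n ↦ harmonicEsymm k n * f n) s) :
    HasSum (fun n ↦ harmonicEsymm k (n + k) * f (n + k)) s := by
  have hzero : ∑ n ∈ range k, harmonicEsymm k n * f n = 0 :=
    sum_eq_zero fun n hn ↦ by rw [harmonicEsymm_eq_zero_of_lt (mem_range.1 hn), zero_mul]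
  simpa only [hzero, sub_zero] using (hasSum_nat_add_iff' k).2 h

lemma sum_antidiagonal_harmonicHsymm_mul_succ (c : ℕ → ℝ) (k r : ℕ) :
    ∑ p ∈ antidiagonal (k + 1), harmonicHsymm p.1 (r + 1) * c p.2 =
      ∑ p ∈ antidiagonal (k + 1), harmonicHsymm p.1 r * c p.2 +
        (∑ p ∈ antidiagonal k, harmonicHsymm p.1 (r + 1) * c p.2) / ((r : ℝ) + 1) := by
  simp only [Nat.sum_antidiagonal_succ, harmonicHsymm_zero_left, harmonicHsymm_succ_succ, add_mul,
    sum_add_distrib, sum_div, div_mul_eq_mul_div]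
  ring

lemma sum_antidiagonal_harmonicHsymm_zero_mul (c : ℕ → ℝ) (k : ℕ) :
    ∑ p ∈ antidiagonal k, harmonicHsymm p.1 0 * c p.2 = c k := by
  cases k <;> simp [Nat.sum_antidiagonal_succ]

end SymmetricFunctions

section Duality

/-- The value `ζ(s)` at a natural number `s ≥ 2`, as a real series; `zeta3` is the case `s = 3`. -/
noncomputable def zetaNat (s : ℕ) : ℝ := ∑' n : ℕ, 1 / ((n : ℝ) + 1) ^ s

lemma hasSum_zetaNat {s : ℕ} (hs : 1 < s) :
    HasSum (fun n : ℕ ↦ 1 / ((n : ℝ) + 1) ^ s) (zetaNat s) := by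
  refine Summable.hasSum ?_
  simpa only [Nat.cast_succ] using
    (summable_nat_add_iff 1).2 (Real.summable_one_div_nat_pow.2 hs)

lemma zetaNat_eq_of_hasSum {s : ℕ} {z : ℝ} (hs : s ≠ 0)
    (h : HasSum (fun n : ℕ ↦ 1 / (n : ℝ) ^ s) z) : zetaNat s = z := by
  simpa [zetaNat, hs] using ((hasSum_nat_add_iff' 1).2 h).tsum_eq

lemma zetaNat_two : zetaNat 2 = π ^ 2 / 6 := zetaNat_eq_of_hasSum two_ne_zero hasSum_zeta_two

lemma zetaNat_four : zetaNat 4 = π ^ 4 / 90 := zetaNat_eq_of_hasSum four_ne_zero hasSum_zeta_four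

/-- The reciprocal binomial coefficient `j! m! / (j + m)!`, whose differences in `j` telescope the
kernel of the duality `ζ(2, 1, …, 1) = ζ(k + 2)`. -/
noncomputable def invChoose (m j : ℕ) : ℝ := 1 / ((j + m).choose m : ℝ)

lemma invChoose_nonneg (m j : ℕ) : 0 ≤ invChoose m j := by
  unfold invChoose
  positivity

lemma invChoose_comm (m j : ℕ) : invChoose m j = invChoose j m := by
  rw [invChoose, invChoose, add_comm m j, Nat.choose_symm_add]

lemma invChoose_zero_right (m : ℕ) : invChoose m 0 = 1 := by simp [invChoose]

lemma invChoose_succ_le (p j : ℕ) : invChoose (p + 1) j ≤ 1 / ((j : ℝ) + 1) := by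
  have h : j + 1 ≤ (j + (p + 1)).choose (p + 1) := calc
    j + 1 = (j + 1).choose j := (Nat.choose_succ_self_right j).symm
    _ ≤ (j + (p + 1)).choose j := Nat.choose_le_choose j (by lia)
    _ = (j + (p + 1)).choose (p + 1) := Nat.choose_symm_add
  exact one_div_le_one_div_of_le (by positivity) (by exact_mod_cast h)

lemma succ_mul_invChoose_div (p j : ℕ) :
    ((p : ℝ) + 1) * (invChoose (p + 1) (j + 1) / ((j : ℝ) + 1)) =
      invChoose (p + 1) j - invChoose (p + 1) (j + 1) := by
  have hchoose : ((j : ℝ) + p + 2) * ((j + (p + 1)).choose (p + 1) : ℝ) =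
      ((j + 1 + (p + 1)).choose (p + 1) : ℝ) * ((j : ℝ) + 1) := by
    have h := Nat.add_one_mul_choose_eq (j + (p + 1)) j
    rw [Nat.choose_symm_add, show j + (p + 1) + 1 = j + 1 + (p + 1) by ring,
      Nat.choose_symm_add] at h
    have h' := congrArg (Nat.cast (R := ℝ)) h
    push_cast at h'
    linear_combination h'
  have hpos : (0 : ℝ) < ((j + (p + 1)).choose (p + 1) : ℝ) :=
    mod_cast Nat.choose_pos (Nat.le_add_left _ _)
  have hpos' : (0 : ℝ) < ((j + 1 + (p + 1)).choose (p + 1) : ℝ) :=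
    mod_cast Nat.choose_pos (Nat.le_add_left _ _)
  rw [invChoose, invChoose]
  field_simp
  linear_combination hchoose

lemma harmonicEsymm_mul_invChoose_div_nonneg (k p j : ℕ) :
    0 ≤ harmonicEsymm k j * (invChoose (p + 1) (j + 1) / ((j : ℝ) + 1)) :=
  mul_nonneg (harmonicEsymm_nonneg k j) (div_nonneg (invChoose_nonneg _ _) (by positivity))

lemma hasSum_harmonicEsymm_mul_invChoose_div_of_hasSum {k p : ℕ} {w : ℝ}
    (hw : HasSum (fun j ↦ (harmonicEsymm k (j + 1) - harmonicEsymm k j) *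
      invChoose (p + 1) (j + 1)) w) :
    HasSum (fun j : ℕ ↦ harmonicEsymm k j * (invChoose (p + 1) (j + 1) / ((j : ℝ) + 1)))
      ((harmonicEsymm k 0 + w) / ((p : ℝ) + 1)) := by
  have hlim : Tendsto (fun j ↦ harmonicEsymm k j * invChoose (p + 1) j) atTop (𝓝 0) :=
    tendsto_harmonicEsymm_mul_of_le k 0 (invChoose_nonneg _) fun j ↦ by
      simpa only [pow_zero] using invChoose_succ_le p j
  have h := hasSum_mul_of_eq_add_sub_succ (g := 0) (v := 0)
    (f := fun j ↦ ((p : ℝ) + 1) * (invChoose (p + 1) (j + 1) / ((j : ℝ) + 1)))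
    (fun j ↦ by rw [succ_mul_invChoose_div, Pi.zero_apply, zero_add])
    (fun j ↦ by
      rw [mul_left_comm]
      exact mul_nonneg (by positivity) (harmonicEsymm_mul_invChoose_div_nonneg k p j))
    hlim (by simp [hasSum_zero]) hw
  rw [invChoose_zero_right, mul_one, zero_add] at h
  refine (h.div_const ((p : ℝ) + 1)).congr_fun fun j ↦ ?_
  field_simp

lemma hasSum_harmonicEsymm_mul_invChoose_div (k p : ℕ) :
    HasSum (fun j : ℕ ↦ harmonicEsymm k j * (invChoose (p + 1) (j + 1) / ((j : ℝ) + 1)))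
      (1 / ((p : ℝ) + 1) ^ (k + 1)) := by
  induction k with
  | zero =>
    simpa using hasSum_harmonicEsymm_mul_invChoose_div_of_hasSum (k := 0) (p := p) (w := 0)
      (by simp [hasSum_zero])
  | succ k ih =>
    have h := hasSum_harmonicEsymm_mul_invChoose_div_of_hasSum (k := k + 1) (p := p) (by
      simpa only [harmonicEsymm_succ_succ, add_sub_cancel_left, div_mul_eq_mul_div,
        mul_div_assoc] using ih)
    rwa [harmonicEsymm_eq_zero_of_lt k.succ_pos, zero_add, div_div, ← pow_succ] at h

lemma hasSum_invChoose_div (j : ℕ) :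
    HasSum (fun p : ℕ ↦ invChoose (p + 1) (j + 1) / ((p : ℝ) + 1)) (1 / ((j : ℝ) + 1)) := by
  simpa [invChoose_comm] using hasSum_harmonicEsymm_mul_invChoose_div 0 j

lemma hasSum_harmonicEsymm_div_sq (k : ℕ) :
    HasSum (fun j : ℕ ↦ harmonicEsymm k j / ((j : ℝ) + 1) ^ 2) (zetaNat (k + 2)) := by
  refine hasSum_comm_of_nonneg (f := fun p j ↦
      harmonicEsymm k j * (invChoose (p + 1) (j + 1) / ((j : ℝ) + 1)) / ((p : ℝ) + 1))
    (fun p j ↦ div_nonneg (harmonicEsymm_mul_invChoose_div_nonneg k p j) (by positivity))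
    (fun p ↦ ?_) (fun j ↦ ?_) (hasSum_zetaNat (s := k + 2) (by lia))
  · rw [pow_succ, ← div_div]
    exact (hasSum_harmonicEsymm_mul_invChoose_div k p).div_const _
  · have h := (hasSum_invChoose_div j).mul_left (harmonicEsymm k j / ((j : ℝ) + 1))
    rw [div_mul_div_comm, mul_one, ← sq] at h
    exact h.congr_fun fun p ↦ by ring

end Duality

section HyperharmonicWeight

/-- The weight `h_n^{(r)} / (n C(n + r, r))` at `n = j + 1`. Since `H_{r - 1} = H_r - 1 / r`, it
takes a form which also makes sense at `r = 0`, where it is `1 / n²`. -/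
noncomputable def hyperWeight (r j : ℕ) : ℝ :=
  (r * (H (j + r) - H r) + 1) / (((j : ℝ) + 1) * ((j : ℝ) + 1 + r))

/-- A primitive in `j`, up to sign, of the change of `hyperWeight r j` when `r` increases by one, so
that this change can be summed by parts. -/
noncomputable def hyperPrimitive (r j : ℕ) : ℝ := (H (j + r) - H r) / ((j : ℝ) + 1 + r)

lemma H_add_sub_nonneg (j r : ℕ) : 0 ≤ H (j + r) - H r :=
  sub_nonneg.2 (H_mono (Nat.le_add_left r j))

lemma hyperWeight_nonneg (r j : ℕ) : 0 ≤ hyperWeight r j := by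
  have := H_add_sub_nonneg j r
  unfold hyperWeight
  positivity

lemma hyperWeight_zero_left (j : ℕ) : hyperWeight 0 j = 1 / ((j : ℝ) + 1) ^ 2 := by
  simp [hyperWeight, sq]

lemma hyperPrimitive_nonneg (r j : ℕ) : 0 ≤ hyperPrimitive r j :=
  div_nonneg (H_add_sub_nonneg j r) (by positivity)

lemma hyperPrimitive_zero_right (r : ℕ) : hyperPrimitive r 0 = 0 := by simp [hyperPrimitive]

lemma hyperPrimitive_le (r j : ℕ) : hyperPrimitive r j ≤ H j / ((j : ℝ) + 1) :=
  div_le_div₀ (H_nonneg j) (H_add_sub_le j r) (by positivity)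
    (le_add_of_nonneg_right r.cast_nonneg)

lemma hyperPrimitive_succ_right (r j : ℕ) :
    hyperPrimitive r (j + 1) = hyperWeight (r + 1) j * (((j : ℝ) + 1) / ((r : ℝ) + 1)) := by
  rw [hyperPrimitive, hyperWeight, ← add_assoc j r 1, Nat.add_right_comm j 1 r, H_succ r]
  push_cast
  field_simp
  ring

lemma hyperWeight_succ_left (r j : ℕ) :
    hyperWeight (r + 1) j =
      hyperWeight r j + (hyperPrimitive r j - hyperPrimitive r (j + 1)) := by
  rw [hyperWeight, hyperWeight, hyperPrimitive, hyperPrimitive, ← add_assoc j r 1,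
    Nat.add_right_comm j 1 r, H_succ (j + r), H_succ r]
  push_cast
  field_simp
  ring

lemma hasSum_harmonicEsymm_mul_hyperWeight_of_hasSum {k r : ℕ} {v w : ℝ}
    (hv : HasSum (fun j ↦ harmonicEsymm k j * hyperWeight r j) v)
    (hw : HasSum (fun j ↦ (harmonicEsymm k (j + 1) - harmonicEsymm k j) *
      hyperPrimitive r (j + 1)) w) :
    HasSum (fun j ↦ harmonicEsymm k j * hyperWeight (r + 1) j) (v + w) := by
  have hlim : Tendsto (fun j ↦ harmonicEsymm k j * hyperPrimitive r j) atTop (𝓝 0) :=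
    tendsto_harmonicEsymm_mul_of_le k 1 (hyperPrimitive_nonneg r) fun j ↦ by
      simpa only [pow_one] using hyperPrimitive_le r j
  simpa only [hyperPrimitive_zero_right, mul_zero, zero_add] using
    hasSum_mul_of_eq_add_sub_succ (hyperWeight_succ_left r)
      (fun j ↦ mul_nonneg (harmonicEsymm_nonneg k j) (hyperWeight_nonneg _ j)) hlim hv hw

lemma hasSum_harmonicEsymm_zero_mul_hyperWeight_succ {r : ℕ} {v : ℝ}
    (hv : HasSum (fun j ↦ harmonicEsymm 0 j * hyperWeight r j) v) :
    HasSum (fun j ↦ harmonicEsymm 0 j * hyperWeight (r + 1) j) v := by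
  simpa using hasSum_harmonicEsymm_mul_hyperWeight_of_hasSum (w := 0) hv (by simp [hasSum_zero])

lemma hasSum_harmonicEsymm_succ_mul_hyperWeight_succ {k r : ℕ} {v w : ℝ}
    (hv : HasSum (fun j ↦ harmonicEsymm (k + 1) j * hyperWeight r j) v)
    (hw : HasSum (fun j ↦ harmonicEsymm k j * hyperWeight (r + 1) j) w) :
    HasSum (fun j ↦ harmonicEsymm (k + 1) j * hyperWeight (r + 1) j)
      (v + w / ((r : ℝ) + 1)) := by
  refine hasSum_harmonicEsymm_mul_hyperWeight_of_hasSum hv ?_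
  refine (hw.div_const ((r : ℝ) + 1)).congr_fun fun j ↦ ?_
  rw [harmonicEsymm_succ_succ, hyperPrimitive_succ_right]
  field_simp
  ring

lemma hasSum_harmonicEsymm_mul_hyperWeight (k r : ℕ) :
    HasSum (fun j ↦ harmonicEsymm k j * hyperWeight r j)
      (∑ p ∈ antidiagonal k, harmonicHsymm p.1 r * zetaNat (p.2 + 2)) := by
  have hbase (k : ℕ) : HasSum (fun j ↦ harmonicEsymm k j * hyperWeight 0 j)
      (∑ p ∈ antidiagonal k, harmonicHsymm p.1 0 * zetaNat (p.2 + 2)) := by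
    simpa only [hyperWeight_zero_left, mul_one_div,
      sum_antidiagonal_harmonicHsymm_zero_mul fun b ↦ zetaNat (b + 2)]
      using hasSum_harmonicEsymm_div_sq k
  induction k generalizing r with
  | zero =>
    induction r with
    | zero => exact hbase 0
    | succ r ihr => simpa using hasSum_harmonicEsymm_zero_mul_hyperWeight_succ ihr
  | succ k ihk =>
    induction r with
    | zero => exact hbase (k + 1)
    | succ r ihr =>
      rw [sum_antidiagonal_harmonicHsymm_mul_succ fun b ↦ zetaNat (b + 2)]
      exact hasSum_harmonicEsymm_succ_mul_hyperWeight_succ ihr (ihk (r + 1))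

lemma hh_div_eq_hyperWeight {r : ℕ} (hr : 1 ≤ r) (j : ℕ) :
    hh r (j + 1) / (((j : ℝ) + 1) * ((j + 1 + r).choose r : ℝ)) = hyperWeight r j := by
  obtain ⟨s, rfl⟩ := Nat.exists_eq_add_of_le' hr
  have hchoose : ((j : ℝ) + 1 + (s + 1)) * ((j + (s + 1)).choose s : ℝ) =
      ((j + 1 + (s + 1)).choose (s + 1) : ℝ) * ((s : ℝ) + 1) := by
    have h := Nat.add_one_mul_choose_eq (j + (s + 1)) s
    rw [Nat.add_right_comm j (s + 1) 1] at h
    have h' := congrArg (Nat.cast (R := ℝ)) h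
    push_cast at h'
    linear_combination h'
  have hpos : (0 : ℝ) < ((j + 1 + (s + 1)).choose (s + 1) : ℝ) :=
    mod_cast Nat.choose_pos (Nat.le_add_left _ _)
  rw [hh, hyperWeight, Nat.add_right_comm j 1, Nat.add_sub_cancel, Nat.add_sub_cancel, H_succ s,
    Nat.add_right_comm j (s + 1) 1]
  push_cast
  field_simp
  linear_combination (H (j + (s + 1)) - H s) * hchoose

end HyperharmonicWeight

theorem stmt15_general (k r : ℕ) (hr : 1 ≤ r) :
    HasSum (fun n : ℕ ↦ harmonicEsymm k n *
        (hh r (n + 1) / (((n : ℝ) + 1) * ((n + 1 + r).choose r : ℝ))))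
      (∑ p ∈ antidiagonal k, harmonicHsymm p.1 r * zetaNat (p.2 + 2)) := by
  simpa only [hh_div_eq_hyperWeight hr] using hasSum_harmonicEsymm_mul_hyperWeight k r

lemma two_mul_sum_antidiagonal_two_harmonicHsymm_mul_zetaNat (r : ℕ) :
    2 * ∑ p ∈ antidiagonal 2, harmonicHsymm p.1 r * zetaNat (p.2 + 2) =
      (H r ^ 2 + H2 r) * π ^ 2 / 6 + 2 * H r * zeta3 + π ^ 4 / 45 := by
  have hzeta3 : zetaNat 3 = zeta3 := rfl
  simp only [Nat.sum_antidiagonal_succ, Nat.antidiagonal_zero, sum_singleton, Nat.reduceAdd,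
    harmonicHsymm_zero_left, harmonicHsymm_one, harmonicHsymm_two, zetaNat_two, hzeta3,
    zetaNat_four]
  ring

theorem stmt15 (r : ℕ) (hr : 1 ≤ r) :
    ∑' n : ℕ, ((H (n+2))^2 - H2 (n+2)) * hh r (n+3) / (((n:ℝ)+3) * (Nat.choose (n+3+r) r : ℝ))
      = ((H r)^2 + H2 r) * Real.pi^2/6 + 2 * H r * zeta3 + Real.pi^4/45 := by
  rw [← two_mul_sum_antidiagonal_two_harmonicHsymm_mul_zetaNat,
    ← ((hasSum_harmonicEsymm_mul_nat_add (stmt15_general 2 r hr)).mul_left 2).tsum_eq]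
  exact tsum_congr fun n ↦ by rw [harmonicEsymm_two]; push_cast; ring_nf
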